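/- Representation of tangent vectors to the space of admissible curves (coordinate form): Let (ρ,C) be local Lie algebroid data on ℝ^n with fiber ℝ^m satisfying the first structure equation, and let (x,a) : J = [t₀,t₁] → ℝ^n × ℝ^m be an admissible C¹ curve. Let Z : J → ℝ^m be continuous and let W : J → ℝ^n be a C¹ map satisfying the linearized admissibility equation (W^i)'(t) = Σ_{j,α} ∂ρ^i_α/∂x^j(x(t)) W^j(t) a^α(t) + Σ_α ρ^i_α(x(t)) Z^α(t) for all i and t ∈ J. Suppose there are t₂ ∈ J and b ∈ ℝ^m with W^i(t₂) = Σ_α ρ^i_α(x(t₂)) b^α for all i. Then there exists a unique C¹ map σ : J → ℝ^m with σ(t₂) = b satisfying (σ^α)'(t) + Σ_{γ,β} C^α_{γβ}(x(t)) a^γ(t) σ^β(t) = Z^α(t) for all α and t ∈ J; moreover this σ satisfies W^i(t) = Σ_α ρ^i_α(x(t)) σ^α(t) for all i and all t ∈ J. -/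

import Mathlib

/-!
Along an admissible curve `(x, a)`, the first structure equation says that if `σ` solves
`σ' = z - C(x)(a, σ)`, then `ρ(x) σ` solves the linearized admissibility equation
`w' = Dρ(x)(w) a + ρ(x) z`: differentiating `ρ(x) σ` produces `Dρ(x)(ρ(x) a) σ - ρ(x) C(x)(a, σ)`,
which the structure equation turns into `Dρ(x)(ρ(x) σ) a`. Both equations are affine in the unknown,
so the first has a unique solution on all of `J` with `σ(t₂) = b`, and uniqueness for the second
gives `W = ρ(x) σ`, since the two sides agree at `t₂`.

Global existence for a field with a uniform Lipschitz constant comes from a single contraction: the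
Picard operator contracts a sup norm weighted by `1 / cosh (κ (t - t₂))`, because the primitive
`sinh (κ τ) / κ` of the weight `cosh (κ τ)` is at most `cosh (κ τ) / κ` in absolute value.
-/

open Set

/-- Partial derivative of a scalar function on `ℝ^n` in the `j`-th coordinate direction. -/
noncomputable def pderiv' {n : ℕ} (f : (Fin n → ℝ) → ℝ) (x : Fin n → ℝ) (j : Fin n) : ℝ :=
  deriv (fun s => f (Function.update x j s)) (x j)

/-- Local Lie algebroid data on `ℝ^n` with fiber `ℝ^m`: smooth anchor coefficients
`ρ^i_α` and smooth structure functions `C^α_{βγ}`, antisymmetric in the lower indices. -/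
structure LocalAlgebroidData (n m : ℕ) where
  ρ : (Fin n → ℝ) → Fin n → Fin m → ℝ
  C : (Fin n → ℝ) → Fin m → Fin m → Fin m → ℝ
  smooth_ρ : ContDiff ℝ (⊤ : ℕ∞) ρ
  smooth_C : ContDiff ℝ (⊤ : ℕ∞) C
  antisymm : ∀ x α β γ, C x α β γ = - C x α γ β

/-- Partial derivative `∂L/∂x^i` of a Lagrangian `L : ℝ^n × ℝ^m → ℝ`. -/
noncomputable def pLx {n m : ℕ} (L : (Fin n → ℝ) × (Fin m → ℝ) → ℝ)
    (x : Fin n → ℝ) (y : Fin m → ℝ) (i : Fin n) : ℝ :=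
  pderiv' (fun z => L (z, y)) x i

/-- Partial derivative `∂L/∂y^α` of a Lagrangian `L : ℝ^n × ℝ^m → ℝ`. -/
noncomputable def pLy {n m : ℕ} (L : (Fin n → ℝ) × (Fin m → ℝ) → ℝ)
    (x : Fin n → ℝ) (y : Fin m → ℝ) (α : Fin m) : ℝ :=
  pderiv' (fun w => L (x, w)) y α

/-- The Euler–Lagrange expression
`EL_α(t) = d/dt[∂L/∂y^α] + Σ_{β,γ} C^γ_{αβ} y^β ∂L/∂y^γ − Σ_i ρ^i_α ∂L/∂x^i`
of a curve `(x,y)`. -/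
noncomputable def ELexpr {n m : ℕ} (A : LocalAlgebroidData n m)
    (L : (Fin n → ℝ) × (Fin m → ℝ) → ℝ)
    (x : ℝ → Fin n → ℝ) (y : ℝ → Fin m → ℝ) (α : Fin m) (t : ℝ) : ℝ :=
  deriv (fun s => pLy L (x s) (y s) α) t
    + ∑ β, ∑ γ, A.C (x t) γ α β * y t β * pLy L (x t) (y t) γ
    - ∑ i, A.ρ (x t) i α * pLx L (x t) (y t) i

/-- The curve `(x,y)` is admissible on `[t₀,t₁]`: `(x^i)' = Σ_α ρ^i_α(x) y^α`. -/
def IsAdmissible {n m : ℕ} (A : LocalAlgebroidData n m) (t₀ t₁ : ℝ)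
    (x : ℝ → Fin n → ℝ) (y : ℝ → Fin m → ℝ) : Prop :=
  ∀ t ∈ Icc t₀ t₁, ∀ i, deriv (fun s => x s i) t = ∑ α, A.ρ (x t) i α * y t α

/-- `(x,y)` is a solution of Lagrange's equations for `L` on `[t₀,t₁]`. -/
def IsLagrangeSolution {n m : ℕ} (A : LocalAlgebroidData n m)
    (L : (Fin n → ℝ) × (Fin m → ℝ) → ℝ) (t₀ t₁ : ℝ)
    (x : ℝ → Fin n → ℝ) (y : ℝ → Fin m → ℝ) : Prop :=
  ∀ α, ∀ t ∈ Icc t₀ t₁,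
    deriv (fun s => pLy L (x s) (y s) α) t
        + ∑ β, ∑ γ, A.C (x t) γ α β * y t β * pLy L (x t) (y t) γ
      = ∑ i, A.ρ (x t) i α * pLx L (x t) (y t) i

/-- A local morphism of local Lie algebroid data: a pair of smooth maps `(φ, Φ)`
satisfying the admissibility and morphism conditions. -/
structure LocalMorphism {n m n' m' : ℕ}
    (A : LocalAlgebroidData n m) (A' : LocalAlgebroidData n' m') where
  φ : (Fin n → ℝ) → Fin n' → ℝ
  Φ : (Fin n → ℝ) → Fin m' → Fin m → ℝ
  smooth_φ : ContDiff ℝ (⊤ : ℕ∞) φ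
  smooth_Φ : ContDiff ℝ (⊤ : ℕ∞) Φ
  adm : ∀ x (k : Fin n') (α : Fin m),
    ∑ i, pderiv' (fun z => φ z k) x i * A.ρ x i α
      = ∑ β, A'.ρ (φ x) k β * Φ x β α
  morph : ∀ x (α : Fin m') (μ ν : Fin m),
    (∑ i, (A.ρ x i ν * pderiv' (fun z => Φ z α μ) x i
            - A.ρ x i μ * pderiv' (fun z => Φ z α ν) x i))
      + (∑ β, Φ x α β * A.C x β μ ν)
      - (∑ β, ∑ γ, A'.C (φ x) α β γ * Φ x β μ * Φ x γ ν) = 0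

/-- The first structure equation of local Lie algebroid data. -/
def FirstStructureEq {n m : ℕ} (A : LocalAlgebroidData n m) : Prop :=
  ∀ (x : Fin n → ℝ) (i : Fin n) (α β : Fin m),
    ∑ j, (A.ρ x j α * pderiv' (fun z => A.ρ z i β) x j
           - A.ρ x j β * pderiv' (fun z => A.ρ z i α) x j)
      = ∑ γ, A.ρ x i γ * A.C x γ α β

open Function Real
open scoped NNReal BoundedContinuousFunction

section PicardLindelof

variable {E : Type*} [NormedAddCommGroup E] [NormedSpace ℝ E]

lemma norm_inv_cosh_smul_integral_le {g : ℝ → E} {c κ s : ℝ} (hκ : 0 < κ)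
    (hg : ∀ τ, ‖g τ‖ ≤ c * cosh (κ * (τ - s))) (t : ℝ) :
    ‖(cosh (κ * (t - s)))⁻¹ • ∫ τ in s..t, g τ‖ ≤ c / κ := by
  have hc : 0 ≤ c := by simpa using (norm_nonneg _).trans (hg s)
  have hderiv (τ : ℝ) :
      HasDerivAt (fun τ => c / κ * sinh (κ * (τ - s))) (c * cosh (κ * (τ - s))) τ := by
    convert! ((((hasDerivAt_id τ).sub_const s).const_mul κ).sinh).const_mul (c / κ) using 1
    simp only [id, mul_one]
    field_simp
  have hint : ∫ τ in s..t, c * cosh (κ * (τ - s)) = c / κ * sinh (κ * (t - s)) := by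
    rw [intervalIntegral.integral_eq_sub_of_hasDerivAt (fun τ _ => hderiv τ)
      ((by fun_prop : Continuous _).intervalIntegrable s t)]
    simp
  have hsinh : |sinh (κ * (t - s))| ≤ cosh (κ * (t - s)) := by
    rw [abs_sinh, ← cosh_abs]
    exact (sinh_lt_cosh _).le
  rw [norm_smul, norm_inv, norm_of_nonneg (cosh_pos _).le, inv_mul_le_iff₀ (cosh_pos _)]
  calc ‖∫ τ in s..t, g τ‖
      ≤ |∫ τ in s..t, c * cosh (κ * (τ - s))| :=
        intervalIntegral.norm_integral_le_abs_of_norm_le (.of_forall hg)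
          ((by fun_prop : Continuous _).intervalIntegrable s t)
    _ = c / κ * |sinh (κ * (t - s))| := by
        rw [hint, abs_mul, abs_of_nonneg (div_nonneg hc hκ.le)]
    _ ≤ cosh (κ * (t - s)) * (c / κ) := by
        rw [mul_comm]
        gcongr

/-- The Picard operator of the vector field `f`, conjugated by multiplication with the weight
`cosh (κ * (t - s))`. The hyperbolic cosine is a smooth stand-in for Bielecki's weight
`exp (κ * |t - s|)`; once `κ` exceeds the Lipschitz constant of `f`, the operator contracts the sup
norm on the whole line. -/
noncomputable def weightedPicard (f : ℝ → E → E) (κ s : ℝ) (b : E) (v : ℝ → E) (t : ℝ) : E :=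
  (cosh (κ * (t - s)))⁻¹ • ODE.picard f s b (fun τ => cosh (κ * (τ - s)) • v τ) t

variable {f : ℝ → E → E} {K : ℝ≥0} {κ s : ℝ} {b : E} {v w : ℝ → E}

lemma norm_weightedPicard_le (hlip : ∀ t, LipschitzWith K (f t)) {c : ℝ} (hc : ∀ t, ‖f t 0‖ ≤ c)
    (hκ : 0 < κ) {M : ℝ} (hv : ∀ t, ‖v t‖ ≤ M) (t : ℝ) :
    ‖weightedPicard f κ s b v t‖ ≤ ‖b‖ + (c + K * M) / κ := by
  rw [weightedPicard, ODE.picard_apply, smul_add]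
  refine (norm_add_le _ _).trans (add_le_add ?_ (norm_inv_cosh_smul_integral_le hκ ?_ t))
  · rw [norm_smul, norm_inv, norm_of_nonneg (cosh_pos _).le]
    exact mul_le_of_le_one_left (norm_nonneg b) (inv_le_one_of_one_le₀ (one_le_cosh _))
  · intro τ
    set C := cosh (κ * (τ - s))
    have hC : 1 ≤ C := one_le_cosh _
    calc ‖f τ (C • v τ)‖ ≤ ‖f τ (C • v τ) - f τ 0‖ + ‖f τ 0‖ := norm_le_norm_sub_add _ _
      _ ≤ K * ‖C • v τ - 0‖ + ‖f τ 0‖ := by gcongr; exact (hlip τ).norm_sub_le _ _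
      _ = K * (C * ‖v τ‖) + ‖f τ 0‖ := by
          rw [sub_zero, norm_smul, norm_of_nonneg (zero_le_one.trans hC)]
      _ ≤ K * (C * M) + c * C := by
          gcongr
          · exact hv τ
          · exact (hc τ).trans (le_mul_of_one_le_right ((norm_nonneg _).trans (hc τ)) hC)
      _ = (c + K * M) * C := by ring

lemma dist_weightedPicard_le (hf : Continuous (uncurry f)) (hlip : ∀ t, LipschitzWith K (f t))
    (hκ : 0 < κ) (hv : Continuous v) (hw : Continuous w) {D : ℝ} (hvw : ∀ t, dist (v t) (w t) ≤ D)
    (t : ℝ) : dist (weightedPicard f κ s b v t) (weightedPicard f κ s b w t) ≤ K * D / κ := by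
  have hint {u : ℝ → E} (hu : Continuous u) :
      IntervalIntegrable (fun τ => f τ (cosh (κ * (τ - s)) • u τ)) MeasureTheory.volume s t :=
    (hf.comp (by fun_prop : Continuous fun τ => (τ, cosh (κ * (τ - s)) • u τ))).intervalIntegrable
      s t
  rw [dist_eq_norm, weightedPicard, weightedPicard, ← smul_sub, ODE.picard_apply, ODE.picard_apply,
    add_sub_add_left_eq_sub, ← intervalIntegral.integral_sub (hint hv) (hint hw)]
  refine norm_inv_cosh_smul_integral_le hκ (fun τ => ?_) t
  rw [← dist_eq_norm]
  calc dist (f τ (cosh (κ * (τ - s)) • v τ)) (f τ (cosh (κ * (τ - s)) • w τ))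
      ≤ K * (cosh (κ * (τ - s)) * dist (v τ) (w τ)) := by
        simpa [dist_smul₀, abs_of_pos (cosh_pos _)] using (hlip τ).dist_le_mul
          (cosh (κ * (τ - s)) • v τ) (cosh (κ * (τ - s)) • w τ)
    _ ≤ K * (cosh (κ * (τ - s)) * D) := by
        gcongr
        exact hvw τ
    _ = K * D * cosh (κ * (τ - s)) := by ring

lemma contDiff_one_of_isIntegralCurve (hf : Continuous (uncurry f))
    (hv : IsIntegralCurve v f) : ContDiff ℝ 1 v := by
  have hderiv : deriv v = fun t => f t (v t) := funext fun t => (hv t).deriv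
  refine contDiff_one_iff_deriv.2 ⟨fun t => (hv t).differentiableAt, ?_⟩
  rw [hderiv]
  exact hf.comp (continuous_id.prodMk hv.continuous)

variable [CompleteSpace E]

lemma hasDerivAt_picard (hf : Continuous (uncurry f)) (hv : Continuous v) (t : ℝ) :
    HasDerivAt (ODE.picard f s b v) (f t (v t)) t := by
  have hfv : Continuous fun τ => f τ (v τ) := hf.comp (by fun_prop : Continuous fun τ => (τ, v τ))
  exact (hfv.integral_hasStrictDerivAt s t).hasDerivAt.const_add b

lemma continuous_weightedPicard (hf : Continuous (uncurry f)) (hv : Continuous v) :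
    Continuous (weightedPicard f κ s b v) := by
  have hpicard : Continuous (ODE.picard f s b fun τ => cosh (κ * (τ - s)) • v τ) :=
    continuous_iff_continuousAt.2 fun t =>
      (hasDerivAt_picard hf (by fun_prop) t).continuousAt
  exact ((by fun_prop : Continuous fun t => cosh (κ * (t - s))).inv₀
    fun t => (cosh_pos _).ne').smul hpicard

lemma exists_weightedPicard_eq_self (hf : Continuous (uncurry f))
    (hlip : ∀ t, LipschitzWith K (f t)) {c : ℝ} (hc : ∀ t, ‖f t 0‖ ≤ c) (hκ : K < κ) (s : ℝ)
    (b : E) : ∃ v : ℝ → E, Continuous v ∧ weightedPicard f κ s b v = v := by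
  have hκ₀ : 0 < κ := K.coe_nonneg.trans_lt hκ
  let T (v : ℝ →ᵇ E) : ℝ →ᵇ E := .ofNormedAddCommGroup (weightedPicard f κ s b v)
    (continuous_weightedPicard hf v.continuous) (‖b‖ + (c + K * ‖v‖) / κ)
    (norm_weightedPicard_le hlip hc hκ₀ v.norm_coe_le_norm)
  have hT : ContractingWith (K / κ.toNNReal) T := by
    refine ⟨?_, .of_dist_le_mul fun v w => (BoundedContinuousFunction.dist_le (by positivity)).2
      fun t => ?_⟩
    · rw [div_lt_one (toNNReal_pos.2 hκ₀)]
      exact (lt_toNNReal_iff_coe_lt).2 hκ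
    · rw [NNReal.coe_div, coe_toNNReal _ hκ₀.le, div_mul_eq_mul_div]
      exact dist_weightedPicard_le hf hlip hκ₀ v.continuous w.continuous
        (BoundedContinuousFunction.dist_coe_le_dist ·) t
  exact ⟨hT.fixedPoint, hT.fixedPoint.continuous, congrArg DFunLike.coe hT.fixedPoint_isFixedPt⟩

theorem exists_isIntegralCurve_of_lipschitzWith (hf : Continuous (uncurry f))
    (hlip : ∀ t, LipschitzWith K (f t)) {c : ℝ} (hc : ∀ t, ‖f t 0‖ ≤ c) (s : ℝ) (b : E) :
    ∃ σ : ℝ → E, σ s = b ∧ IsIntegralCurve σ f := by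
  obtain ⟨v, hv, hfix⟩ := exists_weightedPicard_eq_self hf hlip hc (lt_add_one (K : ℝ)) s b
  let σ (t : ℝ) : E := cosh ((K + 1) * (t - s)) • v t
  have hσ : σ = ODE.picard f s b σ := by
    funext t
    conv_lhs => simp only [σ]; rw [← hfix, weightedPicard, smul_inv_smul₀ (cosh_pos _).ne']
  refine ⟨σ, hσ ▸ ODE.picard_apply₀, fun t => ?_⟩
  simpa only [← hσ] using hasDerivAt_picard (s := s) (b := b) hf (by fun_prop : Continuous σ) t

theorem exists_contDiff_isIntegralCurveOn_of_lipschitzWith {t₀ t₁ : ℝ}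
    (hf : ContinuousOn (uncurry f) (Icc t₀ t₁ ×ˢ univ))
    (hlip : ∀ t ∈ Icc t₀ t₁, LipschitzWith K (f t)) (hs : s ∈ Icc t₀ t₁) (b : E) :
    ∃ σ : ℝ → E, ContDiff ℝ 1 σ ∧ σ s = b ∧ IsIntegralCurveOn σ f (Icc t₀ t₁) := by
  have ht : t₀ ≤ t₁ := hs.1.trans hs.2
  let g (t : ℝ) : E → E := f (projIcc t₀ t₁ ht t)
  have hg : Continuous (uncurry g) := hf.comp_continuous
    (f := fun p : ℝ × E => ((projIcc t₀ t₁ ht p.1 : ℝ), p.2)) (by fun_prop)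
    fun p => ⟨(projIcc t₀ t₁ ht p.1).2, mem_univ _⟩
  have hglip (t : ℝ) : LipschitzWith K (g t) := hlip _ (projIcc t₀ t₁ ht t).2
  obtain ⟨c, hc⟩ := isCompact_Icc.exists_bound_of_continuousOn (s := Icc t₀ t₁)
    (f := fun t => f t 0) (hf.comp (by fun_prop : Continuous fun t : ℝ => (t, (0 : E))).continuousOn
      fun t ht => ⟨ht, mem_univ _⟩)
  obtain ⟨σ, hσs, hσ⟩ := exists_isIntegralCurve_of_lipschitzWith hg hglip
    (fun t => hc _ (projIcc t₀ t₁ ht t).2) s b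
  refine ⟨σ, contDiff_one_of_isIntegralCurve hg hσ, hσs, fun t ht' => ?_⟩
  simpa only [g, projIcc_of_mem ht ht'] using (hσ t).hasDerivWithinAt

end PicardLindelof

section Linear

variable {E F : Type*} [NormedAddCommGroup E] [NormedSpace ℝ E]

theorem eqOn_Icc_of_isIntegralCurveOn {f : ℝ → E → E} {K : ℝ≥0} {t₀ t₁ s : ℝ} {v w : ℝ → E}
    (hlip : ∀ t ∈ Icc t₀ t₁, LipschitzWith K (f t)) (hs : s ∈ Icc t₀ t₁)
    (hv : IsIntegralCurveOn v f (Icc t₀ t₁)) (hw : IsIntegralCurveOn w f (Icc t₀ t₁))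
    (h : v s = w s) : EqOn v w (Icc t₀ t₁) := by
  have hleft : Icc t₀ s ⊆ Icc t₀ t₁ := Icc_subset_Icc_right hs.2
  have hright : Icc s t₁ ⊆ Icc t₀ t₁ := Icc_subset_Icc_left hs.1
  have hIic {u : ℝ → E} (hu : IsIntegralCurveOn u f (Icc t₀ t₁)) :
      ∀ t ∈ Ioc t₀ s, HasDerivWithinAt u (f t (u t)) (Iic t) t := fun t ht =>
    (hu t (hleft (Ioc_subset_Icc_self ht))).mono_of_mem_nhdsWithin
      (Icc_mem_nhdsLE_of_mem ⟨ht.1, ht.2.trans hs.2⟩)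
  have hIci {u : ℝ → E} (hu : IsIntegralCurveOn u f (Icc t₀ t₁)) :
      ∀ t ∈ Ico s t₁, HasDerivWithinAt u (f t (u t)) (Ici t) t := fun t ht =>
    (hu t (hright (Ico_subset_Icc_self ht))).mono_of_mem_nhdsWithin
      (Icc_mem_nhdsGE_of_mem ⟨hs.1.trans ht.1, ht.2⟩)
  rw [← Icc_union_Icc_eq_Icc hs.1 hs.2]
  refine EqOn.union ?_ ?_
  · exact ODE_solution_unique_of_mem_Icc_left (s := fun _ => univ)
      (fun t ht => (hlip t (hleft (Ioc_subset_Icc_self ht))).lipschitzOnWith)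
      (hv.continuousOn.mono hleft) (hIic hv) (fun _ _ => mem_univ _)
      (hw.continuousOn.mono hleft) (hIic hw) (fun _ _ => mem_univ _) h
  · exact ODE_solution_unique_of_mem_Icc_right (s := fun _ => univ)
      (fun t ht => (hlip t (hright (Ico_subset_Icc_self ht))).lipschitzOnWith)
      (hv.continuousOn.mono hright) (hIci hv) (fun _ _ => mem_univ _)
      (hw.continuousOn.mono hright) (hIci hw) (fun _ _ => mem_univ _) h

lemma exists_lipschitzWith_affine {X : Type*} [TopologicalSpace X] [NormedAddCommGroup F]
    [NormedSpace ℝ F] {S : Set X} (hS : IsCompact S) {P : X → E →L[ℝ] F} (hP : ContinuousOn P S)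
    (z : X → F) : ∃ K : ℝ≥0, ∀ t ∈ S, LipschitzWith K fun v => P t v + z t := by
  obtain ⟨c, hc⟩ := hS.exists_bound_of_continuousOn hP
  refine ⟨c.toNNReal, fun t ht => ?_⟩
  have hle : ‖P t‖₊ ≤ c.toNNReal := NNReal.le_toNNReal_of_coe_le (hc t ht)
  exact .of_dist_le_mul fun v w => by
    rw [dist_add_right]
    exact ((P t).lipschitz.weaken hle).dist_le_mul v w

variable {P : ℝ → E →L[ℝ] E} {z : ℝ → E} {t₀ t₁ s : ℝ}

theorem eqOn_Icc_of_isIntegralCurveOn_affine (hP : ContinuousOn P (Icc t₀ t₁)) {v w : ℝ → E}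
    (hs : s ∈ Icc t₀ t₁) (hv : IsIntegralCurveOn v (fun t y => P t y + z t) (Icc t₀ t₁))
    (hw : IsIntegralCurveOn w (fun t y => P t y + z t) (Icc t₀ t₁)) (h : v s = w s) :
    EqOn v w (Icc t₀ t₁) :=
  have ⟨_, hlip⟩ := exists_lipschitzWith_affine isCompact_Icc hP z
  eqOn_Icc_of_isIntegralCurveOn hlip hs hv hw h

theorem exists_contDiff_isIntegralCurveOn_affine [CompleteSpace E]
    (hP : ContinuousOn P (Icc t₀ t₁)) (hz : ContinuousOn z (Icc t₀ t₁)) (hs : s ∈ Icc t₀ t₁)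
    (b : E) : ∃ σ : ℝ → E, ContDiff ℝ 1 σ ∧ σ s = b ∧
      IsIntegralCurveOn σ (fun t y => P t y + z t) (Icc t₀ t₁) :=
  have ⟨_, hlip⟩ := exists_lipschitzWith_affine isCompact_Icc hP z
  have hf : ContinuousOn (uncurry fun t y => P t y + z t) (Icc t₀ t₁ ×ˢ univ) :=
    ((hP.comp continuousOn_fst fun _ hp => hp.1).clm_apply continuousOn_snd).add
      (hz.comp continuousOn_fst fun _ hp => hp.1)
  exists_contDiff_isIntegralCurveOn_of_lipschitzWith hf hlip hs b

end Linear

section Algebroid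

variable {E F : Type*} [NormedAddCommGroup E] [NormedSpace ℝ E] [NormedAddCommGroup F]
  [NormedSpace ℝ F] {ρ : E → F →L[ℝ] E} {C : E → F →L[ℝ] F →L[ℝ] F} {x : ℝ → E} {a z σ : ℝ → F}
  {J : Set ℝ}

/-- The coordinate-free first structure equation: the anchor sends the bracket `C p y s` of constant
sections `y` and `s` to the Lie bracket of the vector fields `ρ · y` and `ρ · s`. -/
def AnchorPreservesBracket (ρ : E → F →L[ℝ] E) (C : E → F →L[ℝ] F →L[ℝ] F) : Prop :=
  ∀ p y s, fderiv ℝ ρ p (ρ p y) s - fderiv ℝ ρ p (ρ p s) y = ρ p (C p y s)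

lemma isIntegralCurveOn_anchor_apply (hρ : Differentiable ℝ ρ) (hρC : AnchorPreservesBracket ρ C)
    (hx : IsIntegralCurveOn x (fun t p => ρ p (a t)) J)
    (hσ : IsIntegralCurveOn σ (fun t s => z t - C (x t) (a t) s) J) :
    IsIntegralCurveOn (fun t => ρ (x t) (σ t))
      (fun t w => fderiv ℝ ρ (x t) w (a t) + ρ (x t) (z t)) J := fun t ht => by
  have hderiv := ((hρ (x t)).hasFDerivAt.comp_hasDerivWithinAt t (hx t ht)).clm_apply (hσ t ht)
  refine hderiv.congr_deriv ?_
  simp only [comp_apply, map_sub, ← hρC (x t)]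
  abel

theorem tangent_vector_representation_general [CompleteSpace F] (hρ : ContDiff ℝ 1 ρ)
    (hC : Continuous C) (hρC : AnchorPreservesBracket ρ C) {t₀ t₁ t₂ : ℝ}
    (hx : IsIntegralCurveOn x (fun t p => ρ p (a t)) (Icc t₀ t₁))
    (ha : ContinuousOn a (Icc t₀ t₁)) (hz : ContinuousOn z (Icc t₀ t₁)) {w : ℝ → E}
    (hw : IsIntegralCurveOn w (fun t w => fderiv ℝ ρ (x t) w (a t) + ρ (x t) (z t)) (Icc t₀ t₁))
    (ht₂ : t₂ ∈ Icc t₀ t₁) {b : F} (hb : w t₂ = ρ (x t₂) b) :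
    ∃ σ : ℝ → F, ContDiff ℝ 1 σ ∧ σ t₂ = b ∧
      IsIntegralCurveOn σ (fun t s => z t - C (x t) (a t) s) (Icc t₀ t₁) ∧
      (∀ t ∈ Icc t₀ t₁, w t = ρ (x t) (σ t)) ∧
      ∀ σ' : ℝ → F, σ' t₂ = b →
        IsIntegralCurveOn σ' (fun t s => z t - C (x t) (a t) s) (Icc t₀ t₁) →
        EqOn σ σ' (Icc t₀ t₁) := by
  have hPσ : ContinuousOn (fun t => -C (x t) (a t)) (Icc t₀ t₁) :=
    ((hC.comp_continuousOn hx.continuousOn).clm_apply ha).neg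
  have hPw : ContinuousOn (fun t => (fderiv ℝ ρ (x t)).flip (a t)) (Icc t₀ t₁) :=
    ((ContinuousLinearMap.flipₗᵢ ℝ E F E).continuous.comp_continuousOn
      ((hρ.continuous_fderiv one_ne_zero).comp_continuousOn hx.continuousOn)).clm_apply ha
  have hfield : (fun t s => z t - C (x t) (a t) s) = fun t s => (-C (x t) (a t)) s + z t := by
    simp only [neg_apply, neg_add_eq_sub]
  obtain ⟨σ, hσ₁, hσb, hσ⟩ := exists_contDiff_isIntegralCurveOn_affine hPσ hz ht₂ b
  rw [← hfield] at hσ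
  have hρσ := isIntegralCurveOn_anchor_apply (hρ.differentiable one_ne_zero) hρC hx hσ
  refine ⟨σ, hσ₁, hσb, hσ,
    eqOn_Icc_of_isIntegralCurveOn_affine hPw ht₂ hw hρσ (by rw [hb, hσb]), fun σ' hσ'b hσ' => ?_⟩
  rw [hfield] at hσ hσ'
  exact eqOn_Icc_of_isIntegralCurveOn_affine hPσ ht₂ hσ hσ' (hσb.trans hσ'b.symm)

end Algebroid

section Coordinates

lemma isIntegralCurveOn_iff_deriv_apply {ι : Type*} [Fintype ι] {w : ℝ → ι → ℝ}
    {f : ℝ → (ι → ℝ) → ι → ℝ} {J : Set ℝ} (hJ : UniqueDiffOn ℝ J) (hw : Differentiable ℝ w) :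
    IsIntegralCurveOn w f J ↔ ∀ t ∈ J, ∀ i, deriv (fun s => w s i) t = f t (w t) i := by
  refine forall₂_congr fun t ht => ?_
  have hderiv : HasDerivWithinAt w (fun i => deriv (fun s => w s i) t) J t :=
    hasDerivWithinAt_pi.2 fun i =>
      (differentiableAt_pi.1 (hw t) i).hasDerivAt.hasDerivWithinAt
  exact ⟨fun h => congrFun ((hJ t ht).eq_deriv J hderiv h),
    fun h => hderiv.congr_deriv (funext h)⟩

lemma fderiv_apply_eq_sum_pderiv' {n : ℕ} {f : (Fin n → ℝ) → ℝ} {x : Fin n → ℝ}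
    (hf : DifferentiableAt ℝ f x) (v : Fin n → ℝ) :
    fderiv ℝ f x v = ∑ j, pderiv' f x j * v j := by
  have hpderiv (j : Fin n) : pderiv' f x j = fderiv ℝ f x (Pi.single j 1) := by
    have hf' : HasFDerivAt f (fderiv ℝ f x) (Function.update x j (x j)) := by
      simpa using hf.hasFDerivAt
    exact (hf'.comp_hasDerivAt (x j) (hasDerivAt_update x j (x j))).deriv
  conv_lhs => rw [pi_eq_sum_univ' v, map_sum]
  simp only [map_smul, hpderiv, smul_eq_mul, mul_comm]

namespace LocalAlgebroidData

variable {n m : ℕ} (A : LocalAlgebroidData n m)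

/-- The anchor `y ↦ (Σ_α ρ^i_α(x) y^α)_i` as a linear map. -/
noncomputable def anchor (x : Fin n → ℝ) : (Fin m → ℝ) →L[ℝ] (Fin n → ℝ) :=
  (Matrix.of (A.ρ x)).mulVecLin.toContinuousLinearMap

/-- The bracket `(y, s) ↦ (Σ_{γ,β} C^α_{γβ}(x) y^γ s^β)_α` of constant sections as a bilinear
map. -/
noncomputable def bracket (x : Fin n → ℝ) : (Fin m → ℝ) →L[ℝ] (Fin m → ℝ) →L[ℝ] (Fin m → ℝ) :=
  (LinearMap.mk₂ ℝ (fun y s α => ∑ γ, ∑ β, A.C x α γ β * y γ * s β)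
    (fun y y' s => by ext; simp [mul_add, add_mul, Finset.sum_add_distrib])
    (fun c y s => by ext; simp [Finset.mul_sum, mul_left_comm, mul_assoc])
    (fun y s s' => by ext; simp [mul_add, Finset.sum_add_distrib])
    (fun c y s => by ext; simp [Finset.mul_sum, mul_left_comm, mul_assoc])).toContinuousBilinearMap

@[simp]
lemma anchor_apply (x : Fin n → ℝ) (y : Fin m → ℝ) (i : Fin n) :
    A.anchor x y i = ∑ α, A.ρ x i α * y α := rfl

@[simp]
lemma bracket_apply (x : Fin n → ℝ) (y s : Fin m → ℝ) (α : Fin m) :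
    A.bracket x y s α = ∑ γ, ∑ β, A.C x α γ β * y γ * s β := rfl

lemma contDiff_ρ_apply (i : Fin n) (α : Fin m) : ContDiff ℝ (⊤ : ℕ∞) fun x => A.ρ x i α :=
  contDiff_pi.1 (contDiff_pi.1 A.smooth_ρ i) α

lemma continuous_C_apply (α γ β : Fin m) : Continuous fun x => A.C x α γ β :=
  (continuous_apply_apply γ β).comp ((continuous_apply α).comp A.smooth_C.continuous)

lemma contDiff_anchor : ContDiff ℝ (⊤ : ℕ∞) A.anchor :=
  contDiff_clm_apply_iff.2 fun y => contDiff_pi.2 fun i => by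
    simp only [anchor_apply]
    exact ContDiff.sum fun α _ => (A.contDiff_ρ_apply i α).mul contDiff_const

lemma continuous_bracket : Continuous A.bracket :=
  continuous_clm_apply.2 fun _ => continuous_clm_apply.2 fun _ => continuous_pi fun α => by
    simp only [bracket_apply]
    exact continuous_finsetSum _ fun γ _ => continuous_finsetSum _ fun β _ =>
      ((A.continuous_C_apply α γ β).mul continuous_const).mul continuous_const

lemma fderiv_anchor_apply (x v : Fin n → ℝ) (y : Fin m → ℝ) (i : Fin n) :
    fderiv ℝ A.anchor x v y i = ∑ j, ∑ α, pderiv' (fun z => A.ρ z i α) x j * v j * y α := by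
  have hanchor : HasFDerivAt A.anchor (fderiv ℝ A.anchor x) x :=
    (A.contDiff_anchor.differentiable (by simp) x).hasFDerivAt
  have hρ (α : Fin m) : DifferentiableAt ℝ (fun z => A.ρ z i α) x :=
    (A.contDiff_ρ_apply i α).differentiable (by simp) x
  have hsum : HasFDerivAt (fun z => A.anchor z y i)
      (∑ α, y α • fderiv ℝ (fun z => A.ρ z i α) x) x := by
    simp only [anchor_apply]
    exact HasFDerivAt.fun_sum fun α _ => (hρ α).hasFDerivAt.mul_const (y α)
  have hcomp : HasFDerivAt (fun z => A.anchor z y i)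
      ((ContinuousLinearMap.proj i).comp ((fderiv ℝ A.anchor x).flip y)) x := by
    simpa using hasFDerivAt_pi'.1 (hanchor.clm_apply (hasFDerivAt_const y x)) i
  calc fderiv ℝ A.anchor x v y i = (∑ α, y α • fderiv ℝ (fun z => A.ρ z i α) x) v :=
        DFunLike.congr_fun (hcomp.unique hsum) v
    _ = ∑ α, y α * ∑ j, pderiv' (fun z => A.ρ z i α) x j * v j := by
        simp only [sum_apply, smul_apply, smul_eq_mul,
          fderiv_apply_eq_sum_pderiv' (hρ _)]
    _ = ∑ j, ∑ α, pderiv' (fun z => A.ρ z i α) x j * v j * y α := by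
        rw [Finset.sum_comm]
        simp only [Finset.mul_sum, mul_comm]

lemma anchor_bracket_apply (x : Fin n → ℝ) (y s : Fin m → ℝ) (i : Fin n) :
    A.anchor x (A.bracket x y s) i =
      ∑ γ, ∑ β, (∑ α, A.ρ x i α * A.C x α γ β) * (y γ * s β) := by
  simp only [anchor_apply, bracket_apply, Finset.mul_sum, Finset.sum_mul]
  rw [Finset.sum_comm]
  refine Finset.sum_congr rfl fun γ _ => ?_
  rw [Finset.sum_comm]
  simp only [mul_assoc]

lemma fderiv_anchor_anchor_apply (x : Fin n → ℝ) (y s : Fin m → ℝ) (i : Fin n) :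
    fderiv ℝ A.anchor x (A.anchor x y) s i =
      ∑ γ, ∑ β, (∑ j, A.ρ x j γ * pderiv' (fun z => A.ρ z i β) x j) * (y γ * s β) := by
  simp only [fderiv_anchor_apply, anchor_apply, Finset.mul_sum, Finset.sum_mul]
  rw [Finset.sum_comm, Finset.sum_congr rfl fun β _ => Finset.sum_comm, Finset.sum_comm]
  exact Finset.sum_congr rfl fun γ _ => Finset.sum_congr rfl fun β _ =>
    Finset.sum_congr rfl fun j _ => by ring

lemma isIntegralCurveOn_anchor_iff_isAdmissible {t₀ t₁ : ℝ} (ht : t₀ < t₁) {x : ℝ → Fin n → ℝ}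
    (hx : Differentiable ℝ x) {a : ℝ → Fin m → ℝ} :
    IsIntegralCurveOn x (fun t p => A.anchor p (a t)) (Icc t₀ t₁) ↔ IsAdmissible A t₀ t₁ x a :=
  isIntegralCurveOn_iff_deriv_apply (uniqueDiffOn_Icc ht) hx

lemma isIntegralCurveOn_linearization_iff {J : Set ℝ} (hJ : UniqueDiffOn ℝ J)
    {w : ℝ → Fin n → ℝ} (hw : Differentiable ℝ w) {x : ℝ → Fin n → ℝ} {a z : ℝ → Fin m → ℝ} :
    IsIntegralCurveOn w (fun t w => fderiv ℝ A.anchor (x t) w (a t) + A.anchor (x t) (z t)) J ↔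
      ∀ t ∈ J, ∀ i, deriv (fun s => w s i) t =
        (∑ j, ∑ α, pderiv' (fun p => A.ρ p i α) (x t) j * w t j * a t α) +
          ∑ α, A.ρ (x t) i α * z t α := by
  simp only [isIntegralCurveOn_iff_deriv_apply hJ hw, Pi.add_apply, fderiv_anchor_apply,
    anchor_apply]

lemma isIntegralCurveOn_sub_bracket_iff {J : Set ℝ} (hJ : UniqueDiffOn ℝ J)
    {σ : ℝ → Fin m → ℝ} (hσ : Differentiable ℝ σ) {x : ℝ → Fin n → ℝ} {a z : ℝ → Fin m → ℝ} :
    IsIntegralCurveOn σ (fun t s => z t - A.bracket (x t) (a t) s) J ↔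
      ∀ t ∈ J, ∀ α, deriv (fun s => σ s α) t +
        ∑ γ, ∑ β, A.C (x t) α γ β * a t γ * σ t β = z t α := by
  simp only [isIntegralCurveOn_iff_deriv_apply hJ hσ, Pi.sub_apply, bracket_apply,
    eq_sub_iff_add_eq]

end LocalAlgebroidData

lemma FirstStructureEq.anchorPreservesBracket {n m : ℕ} {A : LocalAlgebroidData n m}
    (hA : FirstStructureEq A) : AnchorPreservesBracket A.anchor A.bracket := by
  intro x y s
  ext i
  rw [Pi.sub_apply, A.fderiv_anchor_anchor_apply x y s, A.fderiv_anchor_anchor_apply x s y,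
    Finset.sum_comm (f := fun γ β => _ * (s γ * y β)), A.anchor_bracket_apply]
  simp only [← hA x i, mul_comm (s _), Finset.sum_sub_distrib, sub_mul]

end Coordinates

/-- **Representation of tangent vectors to the space of admissible curves
(coordinate form).**  If `(W,Z)` satisfies the linearized admissibility equation along
an admissible curve `(x,a)` and `W(t₂) = ρ(x(t₂)) b` at some `t₂ ∈ J`, then there is a
unique C¹ section `σ` along the base curve with `σ(t₂) = b` solving
`(σ^α)' + Σ C^α_{γβ} a^γ σ^β = Z^α` on `J`, and this `σ` moreover satisfies
`W = ρ(x) σ` on `J`; i.e. `(W,Z)` is the admissible variation `Ξ_{(x,a)}(σ)`. -/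
theorem tangent_vector_representation
    {n m : ℕ} (A : LocalAlgebroidData n m) (hA : FirstStructureEq A)
    (t₀ t₁ : ℝ) (ht : t₀ < t₁)
    (x : ℝ → Fin n → ℝ) (a : ℝ → Fin m → ℝ)
    (hx : ContDiff ℝ 1 x) (ha : ContDiff ℝ 1 a)
    (hadm : IsAdmissible A t₀ t₁ x a)
    (Z : ℝ → Fin m → ℝ) (hZ : Continuous Z)
    (W : ℝ → Fin n → ℝ) (hW : ContDiff ℝ 1 W)
    (hlin : ∀ t ∈ Icc t₀ t₁, ∀ i,
      deriv (fun s => W s i) t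
        = (∑ j, ∑ α, pderiv' (fun z => A.ρ z i α) (x t) j * W t j * a t α)
          + ∑ α, A.ρ (x t) i α * Z t α)
    (t₂ : ℝ) (ht₂ : t₂ ∈ Icc t₀ t₁) (b : Fin m → ℝ)
    (hb : ∀ i, W t₂ i = ∑ α, A.ρ (x t₂) i α * b α) :
    ∃ σ : ℝ → Fin m → ℝ, ContDiff ℝ 1 σ ∧ σ t₂ = b
      ∧ (∀ t ∈ Icc t₀ t₁, ∀ α,
          deriv (fun s => σ s α) t
            + ∑ γ, ∑ β, A.C (x t) α γ β * a t γ * σ t β = Z t α)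
      ∧ (∀ t ∈ Icc t₀ t₁, ∀ i, W t i = ∑ α, A.ρ (x t) i α * σ t α)
      ∧ (∀ σ' : ℝ → Fin m → ℝ, ContDiff ℝ 1 σ' → σ' t₂ = b →
          (∀ t ∈ Icc t₀ t₁, ∀ α,
            deriv (fun s => σ' s α) t
              + ∑ γ, ∑ β, A.C (x t) α γ β * a t γ * σ' t β = Z t α) →
          Set.EqOn σ σ' (Icc t₀ t₁)) := by
  have hJ : UniqueDiffOn ℝ (Icc t₀ t₁) := uniqueDiffOn_Icc ht
  have hx' : IsIntegralCurveOn x (fun t p => A.anchor p (a t)) (Icc t₀ t₁) :=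
    (A.isIntegralCurveOn_anchor_iff_isAdmissible ht (hx.differentiable one_ne_zero)).2 hadm
  have hW' := (A.isIntegralCurveOn_linearization_iff hJ (hW.differentiable one_ne_zero)).2 hlin
  obtain ⟨σ, hσ₁, hσb, hσ, hWσ, huniq⟩ := tangent_vector_representation_general
    (A.contDiff_anchor.of_le (by simp)) A.continuous_bracket hA.anchorPreservesBracket hx'
    ha.continuous.continuousOn hZ.continuousOn hW' ht₂ (funext hb)
  refine ⟨σ, hσ₁, hσb, ?_, fun t ht => congrFun (hWσ t ht), fun σ' hσ'₁ hσ'b hσ' => ?_⟩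
  · exact (A.isIntegralCurveOn_sub_bracket_iff hJ (hσ₁.differentiable one_ne_zero)).1 hσ
  · exact huniq σ' hσ'b
      ((A.isIntegralCurveOn_sub_bracket_iff hJ (hσ'₁.differentiable one_ne_zero)).2 hσ')
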